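/- For every θ ∈ ℝ^d with σ_θ ≤ σ one has σ_θ² ≤ (4σ/(1−η̃))·(f(θ) − f(θ*)). -/

import Mathlib

/-!
Put `Δ = θ* - θ`. Without the outlier the residual `ε + ⟨Δ, x⟩` is a centered Gaussian of variance
`σ² + σ_θ²` independent of `b`, so conditioning on `b` reduces the excess loss to the growth of
`E|√v Z + c|` in `v` for a standard Gaussian `Z`. The subgradient `sgn` of `|·|` bounds this growth
from below, and `E[sgn(√v Z + c) Z] = √(2/π) exp(-c² / (2v))` because `z ↦ -φ(z)` is an
antiderivative of `z ↦ z φ(z)`, where `φ` is the density of `Z`. This gives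
`f(θ) - f(θ*) ≥ √(2/π) (1 - η̃) (√(σ² + σ_θ²) - σ)` for every `θ`; multiplying by
`√(σ² + σ_θ²) + σ`, which is at most `5σ/2` when `σ_θ ≤ σ`, yields the claim since
`5/2 ≤ 4 √(2/π)`.
-/

open MeasureTheory ProbabilityTheory Real
open scoped RealInnerProductSpace ENNReal

noncomputable section

/-- Euclidean space `ℝ^d`. -/
abbrev Vec (d : ℕ) := EuclideanSpace ℝ (Fin d)

/-- The expected `ℓ¹` loss `f(θ) = E |y - ⟨x, θ⟩|` where `y = ⟨x, θ*⟩ + ε + b`. -/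
noncomputable def fLoss {d : ℕ} {Ω : Type} [MeasurableSpace Ω] (P : Measure Ω)
    (x : Ω → Vec d) (ε b : Ω → ℝ) (θs θ : Vec d) : ℝ :=
  ∫ ω, |⟪x ω, θs⟫ + ε ω + b ω - ⟪x ω, θ⟫| ∂P

/-- `σ_θ = ‖θ - θ*‖_H = √⟨θ - θ*, H (θ - θ*)⟩`. -/
noncomputable def sigTh {d : ℕ} (H : Matrix (Fin d) (Fin d) ℝ) (θs θ : Vec d) : ℝ :=
  Real.sqrt ⟪θ - θs, Matrix.toEuclideanLin H (θ - θs)⟫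

/-- The effective outlier proportion `η̃ = 1 - E[exp (-b² / (2σ²))]`. -/
noncomputable def etaT {Ω : Type} [MeasurableSpace Ω] (P : Measure Ω) (b : Ω → ℝ)
    (σ : ℝ) : ℝ :=
  1 - ∫ ω, Real.exp (-(b ω) ^ 2 / (2 * σ ^ 2)) ∂P

/-- `α(z) = √(2/π) · (σ² + z²)^(-1/2) · E[exp (-b² / (2 (σ² + z²)))]`. -/
noncomputable def alphaF {Ω : Type} [MeasurableSpace Ω] (P : Measure Ω) (b : Ω → ℝ)
    (σ z : ℝ) : ℝ :=
  Real.sqrt (2 / π) * (Real.sqrt (σ ^ 2 + z ^ 2))⁻¹ *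
    ∫ ω, Real.exp (-(b ω) ^ 2 / (2 * (σ ^ 2 + z ^ 2))) ∂P

/-- The Gauss error function. -/
noncomputable def erf (t : ℝ) : ℝ :=
  2 / Real.sqrt π * ∫ u in (0:ℝ)..t, Real.exp (-u ^ 2)

section Sign

variable {R : Type*} [Ring R] [LinearOrder R] [IsStrictOrderedRing R]

lemma sign_mul_le_abs (x y : R) : (SignType.sign x : R) * y ≤ |y| := by
  rcases lt_trichotomy x 0 with hx | rfl | hx
  · simpa [sign_neg hx] using neg_le_abs y
  · simp
  · simpa [sign_pos hx] using le_abs_self y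

lemma sign_mul_sub_le_abs_sub_abs (x y : R) :
    (SignType.sign x : R) * (y - x) ≤ |y| - |x| := by
  rw [mul_sub, sign_mul_self]
  exact sub_le_sub_right (sign_mul_le_abs x y) _

lemma monotone_signType_cast : Monotone ((↑) : SignType → R) := by
  intro x y
  cases x <;> cases y <;> simp

end Sign

lemma integrable_sign_mul {α : Type*} [MeasurableSpace α] {μ : Measure α} {f g : α → ℝ}
    (hf : Measurable f) (hg : Integrable g μ) :
    Integrable (fun a ↦ (SignType.sign (f a) : ℝ) * g a) μ := by
  have hsign : Measurable fun y : ℝ ↦ (SignType.sign y : ℝ) :=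
    (monotone_signType_cast.comp SignType.sign.monotone).measurable
  refine hg.bdd_mul (c := 1) (hsign.comp hf).aestronglyMeasurable (ae_of_all _ fun a ↦ ?_)
  rcases SignType.sign (f a) <;> simp

lemma sign_sub_ae_eq_indicator {μ : Measure ℝ} [NullSingletonClass μ] (a : ℝ) :
    (fun z ↦ (SignType.sign (z - a) : ℝ)) =ᵐ[μ] fun z ↦ 2 * (Set.Ioi a).indicator 1 z - 1 := by
  filter_upwards [compl_mem_ae_iff.2 (measure_singleton (μ := μ) a)] with z hz
  rcases lt_or_gt_of_ne hz with h | h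
  · simp [h.not_gt, sign_neg (sub_neg.2 h)]
  · norm_num [h, sign_pos (sub_pos.2 h)]

section Gaussian

variable {v : NNReal}

lemma hasDerivAt_gaussianPDFReal (m : ℝ) (hv : v ≠ 0) (z : ℝ) :
    HasDerivAt (gaussianPDFReal m v) (-((z - m) / v * gaussianPDFReal m v z)) z := by
  have hexponent : HasDerivAt (fun z : ℝ ↦ -(z - m) ^ 2 / (2 * v)) (-((z - m) / v)) z := by
    convert! (((hasDerivAt_id z).sub_const m).pow 2).neg.div_const (2 * (v : ℝ)) using 1
    simp only [id_eq]
    field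
  convert! hexponent.exp.const_mul (√(2 * π * v))⁻¹ using 1
  rw [gaussianPDFReal]
  ring

lemma tendsto_gaussianPDFReal_atTop (m : ℝ) (hv : v ≠ 0) :
    Filter.Tendsto (gaussianPDFReal m v) Filter.atTop (nhds 0) := by
  have hsq : Filter.Tendsto (fun z : ℝ ↦ (z - m) ^ 2 / (2 * v)) Filter.atTop Filter.atTop :=
    ((Filter.tendsto_pow_atTop two_ne_zero).comp
      (Filter.tendsto_atTop_add_const_right _ (-m) Filter.tendsto_id)).atTop_div_const
        (by positivity)
  simpa [gaussianPDFReal_def, Function.comp_def, neg_div] using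
    (Real.tendsto_exp_neg_atTop_nhds_zero.comp hsq).const_mul (√(2 * π * v))⁻¹

lemma integrable_id_gaussianReal (m : ℝ) (v : NNReal) :
    Integrable (fun z ↦ z) (gaussianReal m v) :=
  (memLp_id_gaussianReal 1).integrable le_rfl

lemma setIntegral_Ioi_sub_gaussianReal (m : ℝ) (hv : v ≠ 0) (a : ℝ) :
    ∫ z in Set.Ioi a, (z - m) ∂gaussianReal m v = v * gaussianPDFReal m v a := by
  have hderiv (z : ℝ) : HasDerivAt (fun z ↦ -(v * gaussianPDFReal m v z))
      (gaussianPDFReal m v z * (z - m)) z := by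
    convert! ((hasDerivAt_gaussianPDFReal m hv z).const_mul (v : ℝ)).neg using 1
    field_simp
  have hint : Integrable (fun z ↦ gaussianPDFReal m v z * (z - m)) := by
    have h := (integrable_id_gaussianReal m v).sub (integrable_const m)
    rw [gaussianReal_of_var_ne_zero _ hv, gaussianPDF_def,
      integrable_withDensity_iff_integrable_smul' (by fun_prop) (by simp)] at h
    simpa [gaussianPDFReal_nonneg] using h
  have htendsto : Filter.Tendsto (fun z ↦ -(v * gaussianPDFReal m v z)) Filter.atTop (nhds 0) := by
    simpa using ((tendsto_gaussianPDFReal_atTop m hv).const_mul (v : ℝ)).neg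
  rw [← integral_indicator measurableSet_Ioi, integral_gaussianReal_eq_integral_smul hv]
  simp_rw [← Set.indicator_smul_apply, smul_eq_mul]
  rw [integral_indicator measurableSet_Ioi,
    integral_Ioi_of_hasDerivAt_of_tendsto' (fun z _ ↦ hderiv z) hint.integrableOn htendsto]
  simp

lemma integral_sign_sub_mul_sub_gaussianReal (m : ℝ) (hv : v ≠ 0) (a : ℝ) :
    ∫ z, (SignType.sign (z - a) : ℝ) * (z - m) ∂gaussianReal m v
      = 2 * (v * gaussianPDFReal m v a) := by
  have := nullSingletonClass_gaussianReal (μ := m) hv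
  have hint : Integrable (fun z ↦ z - m) (gaussianReal m v) :=
    (integrable_id_gaussianReal m v).sub (integrable_const m)
  have hmean : ∫ z, (z - m) ∂gaussianReal m v = 0 := by
    rw [integral_sub (integrable_id_gaussianReal m v) (integrable_const m)]
    simp [integral_id_gaussianReal]
  calc ∫ z, (SignType.sign (z - a) : ℝ) * (z - m) ∂gaussianReal m v
      = ∫ z, (2 * (Set.Ioi a).indicator (fun z ↦ z - m) z - (z - m)) ∂gaussianReal m v := by
        refine integral_congr_ae ?_
        filter_upwards [sign_sub_ae_eq_indicator (μ := gaussianReal m v) a] with z hz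
        by_cases h : z ∈ Set.Ioi a <;> simp only [hz, h, Set.indicator_of_mem,
          Set.indicator_of_notMem, not_false_eq_true, Pi.one_apply] <;> ring
    _ = 2 * (v * gaussianPDFReal m v a) := by
        rw [integral_sub ((hint.indicator measurableSet_Ioi).const_mul 2) hint, hmean, sub_zero,
          integral_const_mul, integral_indicator measurableSet_Ioi,
          setIntegral_Ioi_sub_gaussianReal m hv]

lemma gaussianReal_map_sqrt_div_sqrt_mul (hv : v ≠ 0) (w : NNReal) :
    (gaussianReal 0 v).map (√w / √v * ·) = gaussianReal 0 w := by
  rw [gaussianReal_map_const_mul, mul_zero]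
  congr 1
  ext
  simp [div_pow, hv]

lemma sqrt_sub_sqrt_mul_exp_le_integral_abs_add_sub (hv : v ≠ 0) (w : NNReal) (c : ℝ) :
    √(2 / π) * (√w - √v) * Real.exp (-c ^ 2 / (2 * v))
      ≤ ∫ z, |z + c| ∂gaussianReal 0 w - ∫ z, |z + c| ∂gaussianReal 0 v := by
  set k : ℝ := √w / √v with hk
  have hint := integrable_id_gaussianReal 0 v
  have hint_scaled : Integrable (fun z ↦ |k * z + c|) (gaussianReal 0 v) :=
    ((hint.const_mul k).add (integrable_const c)).abs
  have hint_abs : Integrable (fun z ↦ |z + c|) (gaussianReal 0 v) :=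
    (hint.add (integrable_const c)).abs
  calc √(2 / π) * (√w - √v) * Real.exp (-c ^ 2 / (2 * v))
      = (k - 1) * (2 * (v * gaussianPDFReal 0 v (-c))) := by
        rw [gaussianPDFReal, hk, sub_zero, neg_sq, Real.sqrt_mul (by positivity),
          Real.sqrt_mul zero_le_two, Real.sqrt_div zero_le_two]
        field_simp
        rw [Real.sq_sqrt zero_le_two, Real.sq_sqrt v.coe_nonneg]
        ring
    _ = ∫ z, (k - 1) * ((SignType.sign (z + c) : ℝ) * z) ∂gaussianReal 0 v := by
        simp [integral_const_mul, ← integral_sign_sub_mul_sub_gaussianReal 0 hv]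
    _ ≤ ∫ z, (|k * z + c| - |z + c|) ∂gaussianReal 0 v := by
        refine integral_mono ((integrable_sign_mul (by fun_prop) hint).const_mul _)
          (hint_scaled.sub hint_abs) fun z ↦ ?_
        convert sign_mul_sub_le_abs_sub_abs (z + c) (k * z + c) using 1
        ring
    _ = ∫ z, |z + c| ∂gaussianReal 0 w - ∫ z, |z + c| ∂gaussianReal 0 v := by
        rw [integral_sub hint_scaled hint_abs, ← gaussianReal_map_sqrt_div_sqrt_mul hv w,
          integral_map (by fun_prop) (by fun_prop)]

end Gaussian

section Independence

variable {Ω : Type*} [MeasurableSpace Ω] {P : Measure Ω} [IsFiniteMeasure P]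

lemma integral_comp_prodMk_of_indepFun {𝓧 𝓨 E : Type*} [MeasurableSpace 𝓧] [MeasurableSpace 𝓨]
    [NormedAddCommGroup E] [NormedSpace ℝ E] {μ : Measure 𝓧} {ν : Measure 𝓨} [SFinite μ]
    [SFinite ν] {X : Ω → 𝓧} {Y : Ω → 𝓨} {f : 𝓧 × 𝓨 → E} (hX : HasLaw X μ P) (hY : HasLaw Y ν P)
    (hXY : IndepFun X Y P) (hf : Integrable f (μ.prod ν)) :
    ∫ ω, f (X ω, Y ω) ∂P = ∫ y, ∫ x, f (x, y) ∂μ ∂ν := by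
  rw [← integral_prod_symm f hf]
  exact (hXY.hasLaw_prod hX hY).integral_comp hf.aestronglyMeasurable

lemma integrable_exp_neg_sq_div {Y : Ω → ℝ} (hY : AEMeasurable Y P) {v : ℝ} (hv : 0 ≤ v) :
    Integrable (fun ω ↦ Real.exp (-(Y ω) ^ 2 / (2 * v))) P := by
  refine Integrable.of_bound (by fun_prop) 1 (ae_of_all _ fun ω ↦ ?_)
  rw [Real.norm_of_nonneg (Real.exp_nonneg _), Real.exp_le_one_iff, neg_div]
  exact neg_nonpos.2 (by positivity)

lemma sqrt_sub_sqrt_mul_integral_exp_le_integral_abs_add_sub {U V Y : Ω → ℝ} {v w : NNReal}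
    (hv : v ≠ 0) (hV : HasLaw V (gaussianReal 0 v) P) (hU : HasLaw U (gaussianReal 0 w) P)
    (hY : Integrable Y P) (hVY : IndepFun V Y P) (hUY : IndepFun U Y P) :
    √(2 / π) * (√w - √v) * ∫ ω, Real.exp (-(Y ω) ^ 2 / (2 * v)) ∂P
      ≤ ∫ ω, |U ω + Y ω| ∂P - ∫ ω, |V ω + Y ω| ∂P := by
  set ν := P.map Y
  have hYlaw : HasLaw Y ν P := ⟨hY.aemeasurable, rfl⟩
  have hid : Integrable (fun y ↦ y) ν :=
    (integrable_map_measure aestronglyMeasurable_id hY.aemeasurable).2 hY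
  have hint (u : NNReal) :
      Integrable (fun p : ℝ × ℝ ↦ |p.1 + p.2|) ((gaussianReal 0 u).prod ν) :=
    (((integrable_id_gaussianReal 0 u).comp_fst ν).add (hid.comp_snd _)).abs
  calc √(2 / π) * (√w - √v) * ∫ ω, Real.exp (-(Y ω) ^ 2 / (2 * v)) ∂P
      = ∫ c, √(2 / π) * (√w - √v) * Real.exp (-c ^ 2 / (2 * v)) ∂ν := by
        rw [integral_map hY.aemeasurable (by fun_prop), integral_const_mul]
    _ ≤ ∫ c, (∫ z, |z + c| ∂gaussianReal 0 w - ∫ z, |z + c| ∂gaussianReal 0 v) ∂ν :=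
        integral_mono ((integrable_exp_neg_sq_div aemeasurable_id v.coe_nonneg).const_mul _)
          ((hint w).integral_prod_right.sub (hint v).integral_prod_right)
          (sqrt_sub_sqrt_mul_exp_le_integral_abs_add_sub hv w)
    _ = ∫ ω, |U ω + Y ω| ∂P - ∫ ω, |V ω + Y ω| ∂P := by
        rw [integral_sub (hint w).integral_prod_right (hint v).integral_prod_right,
          ← integral_comp_prodMk_of_indepFun hU hYlaw hUY (hint w),
          ← integral_comp_prodMk_of_indepFun hV hYlaw hVY (hint v)]

end Independence

lemma five_div_eight_le_sqrt_two_div_pi : 5 / 8 ≤ √(2 / π) := by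
  refine Real.le_sqrt_of_sq_le ((le_div_iff₀ Real.pi_pos).2 ?_)
  linarith [Real.pi_lt_four]

lemma sq_le_four_mul_mul_sqrt_sub {σ s : ℝ} (hs : 0 ≤ s) (hsσ : s ≤ σ) :
    s ^ 2 ≤ 4 * σ * (√(2 / π) * (√(σ ^ 2 + s ^ 2) - σ)) := by
  have hσ : 0 ≤ σ := hs.trans hsσ
  set r := √(σ ^ 2 + s ^ 2)
  have hr_sq : r ^ 2 = σ ^ 2 + s ^ 2 := Real.sq_sqrt (by positivity)
  have hσr : 0 ≤ r - σ := sub_nonneg.2 (Real.le_sqrt_of_sq_le (by linarith [sq_nonneg s]))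
  have hr : r ≤ 3 / 2 * σ := Real.sqrt_le_iff.2 ⟨by positivity, by nlinarith⟩
  calc s ^ 2 = (r + σ) * (r - σ) := by linear_combination -hr_sq
    _ ≤ 4 * σ * (5 / 8) * (r - σ) := by gcongr; linarith
    _ ≤ 4 * σ * √(2 / π) * (r - σ) := by gcongr; exact five_div_eight_le_sqrt_two_div_pi
    _ = 4 * σ * (√(2 / π) * (r - σ)) := mul_assoc _ _ _

lemma sq_le_four_mul_div_mul_of_sqrt_sub_le {σ s A D : ℝ} (hs : 0 ≤ s) (hsσ : s ≤ σ) (hA : 0 < A)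
    (hD : √(2 / π) * (√(σ ^ 2 + s ^ 2) - σ) * A ≤ D) : s ^ 2 ≤ 4 * σ / A * D := by
  have hσ : 0 ≤ σ := hs.trans hsσ
  calc s ^ 2 ≤ 4 * σ * (√(2 / π) * (√(σ ^ 2 + s ^ 2) - σ)) := sq_le_four_mul_mul_sqrt_sub hs hsσ
    _ = 4 * σ / A * (√(2 / π) * (√(σ ^ 2 + s ^ 2) - σ) * A) := by field
    _ ≤ 4 * σ / A * D := by gcongr

section LinearModel

variable {d : ℕ} {Ω : Type}

/-- The residual `y - b - ⟨x, θ⟩ = ⟨x, θ* - θ⟩ + ε` of the parameter `θ` once the outlier `b` is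
removed; the loss `fLoss` averages its absolute value after `b` has been added back. -/
def cleanResidual (x : Ω → Vec d) (ε : Ω → ℝ) (θs θ : Vec d) : Ω → ℝ :=
  fun ω ↦ ⟪θs - θ, x ω⟫ + ε ω

lemma cleanResidual_self (x : Ω → Vec d) (ε : Ω → ℝ) (θs : Vec d) :
    cleanResidual x ε θs θs = ε := by
  ext ω
  simp [cleanResidual]

variable [MeasurableSpace Ω] {P : Measure Ω} {H : Matrix (Fin d) (Fin d) ℝ} {x : Ω → Vec d}
  {ε b : Ω → ℝ} {σ : ℝ}

lemma fLoss_eq_integral_abs_cleanResidual_add (P : Measure Ω) (x : Ω → Vec d) (ε b : Ω → ℝ)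
    (θs θ : Vec d) : fLoss P x ε b θs θ = ∫ ω, |cleanResidual x ε θs θ ω + b ω| ∂P := by
  refine integral_congr_ae (ae_of_all _ fun ω ↦ congrArg abs ?_)
  rw [cleanResidual, inner_sub_left, real_inner_comm, real_inner_comm θ]
  ring

lemma sigTh_sq (hH : H.PosSemidef) (θs θ : Vec d) :
    sigTh H θs θ ^ 2 = ⟪θs - θ, Matrix.toEuclideanLin H (θs - θ)⟫ := by
  rw [sigTh, Real.sq_sqrt ((Matrix.isPositive_toEuclideanLin_iff.2 hH).inner_nonneg_right _),
    ← neg_sub θs θ, map_neg, inner_neg_neg]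

lemma hasLaw_cleanResidual (hH : H.PosSemidef)
    (hx : ∀ v : Vec d, HasLaw (fun ω ↦ ⟪v, x ω⟫)
      (gaussianReal 0 (Real.toNNReal ⟪v, Matrix.toEuclideanLin H v⟫)) P)
    (hε : HasLaw ε (gaussianReal 0 (Real.toNNReal (σ ^ 2))) P) (hxε : IndepFun x ε P)
    (θs θ : Vec d) :
    HasLaw (cleanResidual x ε θs θ)
      (gaussianReal 0 (Real.toNNReal (σ ^ 2 + sigTh H θs θ ^ 2))) P := by
  have hindep : IndepFun (fun ω ↦ ⟪θs - θ, x ω⟫) ε P :=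
    hxε.comp (φ := fun u : Vec d ↦ ⟪θs - θ, u⟫) (by fun_prop) measurable_id
  refine ⟨(hx (θs - θ)).aemeasurable.add hε.aemeasurable, ?_⟩
  have h := gaussianReal_add_gaussianReal_of_indepFun hindep (hx (θs - θ)).map_eq hε.map_eq
  rwa [← sigTh_sq hH, ← Real.toNNReal_add (sq_nonneg _) (sq_nonneg _), add_zero,
    add_comm (sigTh H θs θ ^ 2)] at h

lemma indepFun_cleanResidual (h : IndepFun (fun ω ↦ (x ω, ε ω)) b P) (θs θ : Vec d) :
    IndepFun (cleanResidual x ε θs θ) b P :=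
  h.comp (φ := fun p : Vec d × ℝ ↦ ⟪θs - θ, p.1⟫ + p.2) (by fun_prop) measurable_id

lemma one_sub_etaT_pos [IsProbabilityMeasure P] (hb : AEMeasurable b P) (σ : ℝ) :
    0 < 1 - etaT P b σ := by
  rw [etaT, sub_sub_cancel]
  exact integral_exp_pos (integrable_exp_neg_sq_div hb (sq_nonneg σ))

theorem stmt13_general [IsProbabilityMeasure P] (hH : H.PosSemidef) (hσ : 0 < σ)
    (hx : ∀ v : Vec d, HasLaw (fun ω ↦ ⟪v, x ω⟫)
      (gaussianReal 0 (Real.toNNReal ⟪v, Matrix.toEuclideanLin H v⟫)) P)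
    (hε : HasLaw ε (gaussianReal 0 (Real.toNNReal (σ ^ 2))) P) (hb : Integrable b P)
    (hxε : IndepFun x ε P) (hxεb : IndepFun (fun ω ↦ (x ω, ε ω)) b P) (θs θ : Vec d) :
    √(2 / π) * (√(σ ^ 2 + sigTh H θs θ ^ 2) - σ) * (1 - etaT P b σ)
      ≤ fLoss P x ε b θs θ - fLoss P x ε b θs θs := by
  have hσ2 : Real.toNNReal (σ ^ 2) ≠ 0 := (Real.toNNReal_pos.2 (by positivity)).ne'
  have h := sqrt_sub_sqrt_mul_integral_exp_le_integral_abs_add_sub hσ2 hε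
    (hasLaw_cleanResidual hH hx hε hxε θs θ) hb
    (cleanResidual_self x ε θs ▸ indepFun_cleanResidual hxεb θs θs)
    (indepFun_cleanResidual hxεb θs θ)
  rw [Real.coe_toNNReal _ (sq_nonneg σ), Real.coe_toNNReal _ (by positivity),
    Real.sqrt_sq hσ.le] at h
  rwa [fLoss_eq_integral_abs_cleanResidual_add, fLoss_eq_integral_abs_cleanResidual_add,
    cleanResidual_self, etaT, sub_sub_cancel]

end LinearModel

theorem stmt13 {d : ℕ} (hd : 1 ≤ d)
    {Ω : Type} [MeasurableSpace Ω] (P : Measure Ω) [IsProbabilityMeasure P]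
    (θs : Vec d) (H : Matrix (Fin d) (Fin d) ℝ) (hH : H.PosDef)
    (σ η : ℝ) (hσ : 0 < σ) (hη0 : 0 ≤ η) (hη1 : η < 1)
    (x : Ω → Vec d) (ε b : Ω → ℝ)
    (hxm : Measurable x) (hεm : Measurable ε) (hbm : Measurable b)
    (hxg : ∀ v : Vec d, Measure.map (fun ω => ⟪v, x ω⟫) P
        = gaussianReal 0 (Real.toNNReal ⟪v, Matrix.toEuclideanLin H v⟫))
    (hεg : Measure.map ε P = gaussianReal 0 (Real.toNNReal (σ ^ 2)))
    (hbη : P {ω | b ω ≠ 0} = ENNReal.ofReal η)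
    (hbi : Integrable b P)
    (hind1 : IndepFun x ε P)
    (hind2 : IndepFun (fun ω => (x ω, ε ω)) b P):
    ∀ θ : Vec d, sigTh H θs θ ≤ σ →
      sigTh H θs θ ^ 2 ≤ 4 * σ / (1 - etaT P b σ) *
        (fLoss P x ε b θs θ - fLoss P x ε b θs θs) := by
  intro θ hθ
  have hη : 0 < 1 - etaT P b σ := one_sub_etaT_pos hbi.aemeasurable σ
  exact sq_le_four_mul_div_mul_of_sqrt_sub_le (Real.sqrt_nonneg _) hθ hη <|
    stmt13_general hH.posSemidef hσ (fun v ↦ ⟨by fun_prop, hxg v⟩) ⟨hεm.aemeasurable, hεg⟩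
      hbi hind1 hind2 θs θ
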